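/- arXiv:2309.02852 — 2 statements merged into one kernel-verified Lean document; each statement's English description precedes it below -/
import Mathlib

section
/- Let G be a 4-regular planar graph with a cutpoint c separating G₁ and G₂, and let G'_i be G_i with a self-loop added at c (making c degree 4). If an embedding of G has threaded circuit partition C, and embeddings of G'_1, G'_2 (induced from that of G) have threaded circuit partitions C₁ and C₂, then |C| = |C₁| + |C₂| − 1. -/
/-!
A combinatorial map ("plane graph" via rotation system): `D` is the set of darts
(edge-ends); `rot` is the counterclockwise rotation of darts around their vertex
(vertices are `rot`-orbits); `inv` pairs the two darts of each edge
(edges are `inv`-orbits, of size 2).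
-/
structure CombMap (D : Type) [Fintype D] [DecidableEq D] where
  rot : Equiv.Perm D
  inv : Equiv.Perm D
  inv_invol : ∀ d, inv (inv d) = d
  inv_ne : ∀ d, inv d ≠ d

namespace CombMap

variable {D : Type} [Fintype D] [DecidableEq D] (M : CombMap D)

/-- Every vertex has degree 4: each `rot`-orbit has size exactly 4. -/
def FourRegular : Prop :=
  (∀ d, M.rot (M.rot (M.rot (M.rot d))) = d) ∧ (∀ d, M.rot d ≠ d) ∧
    (∀ d, M.rot (M.rot d) ≠ d)

/-- `IsThread d e`: the length-two path consisting of the edge of dart `d`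
(traversed from the vertex of `d` to the vertex of `inv d`, the midpoint)
followed by the edge of dart `e` is a thread: `e` is a dart at the midpoint and
the two edges are not contiguous in the rotation at the midpoint. -/
def IsThread (d e : D) : Prop :=
  M.rot.SameCycle (M.inv d) e ∧ e ≠ M.inv d ∧ e ≠ M.rot (M.inv d) ∧
    M.rot e ≠ M.inv d

/-- Traversing the edge of dart `d` and continuing straight through the vertex
at its far end: the unique continuation of a threaded circuit. -/
def threadStep (d : D) : D := M.rot (M.rot (M.inv d))

/-- A set of darts closed under continuing along threads and under reversal:
closed unions of (undirected) threaded circuits. -/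
def ClosedTC (s : Set D) : Prop := ∀ x ∈ s, M.threadStep x ∈ s ∧ M.inv x ∈ s

/-- The set of darts of a single (undirected) threaded circuit: a minimal
nonempty set of darts closed under thread-continuation and reversal. -/
def Circuit (s : Set D) : Prop :=
  s.Nonempty ∧ M.ClosedTC s ∧ ∀ t ⊆ s, t.Nonempty → M.ClosedTC t → t = s

/-- The number of circuits in the threaded circuit partition. -/
noncomputable def circuitCount : ℕ := Set.ncard {s : Set D | M.Circuit s}

/-- Reachability between darts by walking along edges and around vertices,
avoiding the darts in `A`. -/
def ReachAvoiding (A : Set D) (a b : D) : Prop :=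
  Relation.ReflTransGen
    (fun x y => (y = M.rot x ∨ y = M.inv x) ∧ x ∉ A ∧ y ∉ A) a b

/-- The graph is connected. -/
def Connected : Prop := ∀ a b : D, M.ReachAvoiding ∅ a b

/-- Number of vertices: the number of `rot`-orbits. -/
noncomputable def vertexCount : ℕ :=
  Set.ncard {s : Set D | ∃ d, s = {e | M.rot.SameCycle d e}}

/-- Number of edges: the number of `inv`-orbits. -/
noncomputable def edgeCount : ℕ :=
  Set.ncard {s : Set D | ∃ d, s = {e | M.inv.SameCycle d e}}

/-- Number of faces: the number of orbits of the face permutation `rot ∘ inv`. -/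
noncomputable def faceCount : ℕ :=
  Set.ncard {s : Set D | ∃ d, s = {e | (M.rot * M.inv).SameCycle d e}}

/-- The embedding is planar (genus 0): Euler's formula `V - E + F = 2` holds. -/
def EulerPlanar : Prop :=
  (M.vertexCount : ℤ) - (M.edgeCount : ℤ) + (M.faceCount : ℤ) = 2

end CombMap

namespace CutHelp

lemma even_of_invol {D : Type} (T : Finset D) (σ : D → D)
    (h1 : ∀ d ∈ T, σ d ∈ T) (h2 : ∀ d ∈ T, σ d ≠ d) (h3 : ∀ d ∈ T, σ (σ d) = d) :
    Even T.card := by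
  have h : ∑ d ∈ T, (1 : ZMod 2) = 0 := by
    refine Finset.sum_involution (fun d _ => σ d) ?_ ?_ ?_ ?_
    · intro d _; decide
    · intro d hd _; exact h2 d hd
    · intro d hd; exact h1 d hd
    · intro d hd; exact h3 d hd
  rw [Finset.sum_const, nsmul_eq_mul, mul_one] at h
  exact (ZMod.natCast_eq_zero_iff_even).1 h

section inv
variable {D : Type} [Fintype D] [DecidableEq D]

/-- functions invariant under a permutation -/
def Inv (σ : Equiv.Perm D) : Submodule (ZMod 2) (D → ZMod 2) where
  carrier := {f | ∀ d, f (σ d) = f d}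
  add_mem' := by intro a b ha hb d; simp [ha d, hb d]
  zero_mem' := by intro d; rfl
  smul_mem' := by intro c a ha d; simp [ha d]

lemma inv_zpow {σ : Equiv.Perm D} {f : D → ZMod 2} (hf : ∀ d, f (σ d) = f d) {d e : D}
    (h : σ.SameCycle d e) : f e = f d := by
  obtain ⟨n, rfl⟩ := h.exists_nat_pow_eq
  induction n with
  | zero => rfl
  | succ n ih => rw [pow_succ', Equiv.Perm.mul_apply, hf]; exact ih ⟨n, by simp⟩

lemma finrank_Inv (σ : Equiv.Perm D) :
    Module.finrank (ZMod 2) (Inv σ) = Set.ncard {s : Set D | ∃ d, s = {e | σ.SameCycle d e}} := by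
  classical
  set S := {s : Set D | ∃ d, s = {e | σ.SameCycle d e}} with hS
  let cl : D → S := fun d => ⟨{e | σ.SameCycle d e}, d, rfl⟩
  have hcl : ∀ d e, cl d = cl e ↔ σ.SameCycle d e := by
    intro d e
    constructor
    · intro h
      have : e ∈ (cl d : Set D) := by rw [h]; exact Equiv.Perm.SameCycle.refl _ _
      exact this
    · intro h
      apply Subtype.ext
      ext x
      exact ⟨fun hx => h.symm.trans hx, fun hx => h.trans hx⟩
  have hsurj : Function.Surjective cl := by
    rintro ⟨s, d, rfl⟩; exact ⟨d, rfl⟩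
  let L : (S → ZMod 2) →ₗ[ZMod 2] (D → ZMod 2) := LinearMap.funLeft (ZMod 2) (ZMod 2) cl
  have hinj : Function.Injective L := LinearMap.funLeft_injective_of_surjective _ _ _ hsurj
  have hr : LinearMap.range L = Inv σ := by
    ext f
    constructor
    · rintro ⟨g, rfl⟩ d
      change g (cl (σ d)) = g (cl d)
      congr 1
      rw [hcl]
      exact (Equiv.Perm.sameCycle_apply_left).2 (Equiv.Perm.SameCycle.refl _ _)
    · intro hf
      refine ⟨fun s => f (hsurj s).choose, ?_⟩
      funext d
      change f (hsurj (cl d)).choose = f d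
      exact inv_zpow hf ((hcl _ _).1 (hsurj (cl d)).choose_spec.symm)
  rw [← hr, LinearMap.finrank_range_of_inj hinj, Module.finrank_pi, ← Nat.card_eq_fintype_card]
  rfl

/-- standard form -/
noncomputable def dot : LinearMap.BilinForm (ZMod 2) (D → ZMod 2) :=
  LinearMap.mk₂ (ZMod 2) (fun x y => ∑ d, x d * y d)
    (by intro a b c; simp [add_mul, Finset.sum_add_distrib])
    (by intro a b c; simp [mul_assoc, Finset.mul_sum])
    (by intro a b c; simp [mul_add, Finset.sum_add_distrib])
    (by intro a b c; simp [mul_left_comm, Finset.mul_sum])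

lemma dot_apply (x y : D → ZMod 2) : dot x y = ∑ d, x d * y d := rfl

lemma dot_symm : (dot (D := D)).IsSymm := by
  constructor
  intro x y; simp [dot_apply, mul_comm]

lemma dot_nondeg : (dot (D := D)).Nondegenerate := by
  refine (LinearMap.IsRefl.nondegenerate_iff_separatingLeft (B := dot) dot_symm.isRefl).2 ?_
  intro x hx
  funext d
  have := hx (Pi.single d 1)
  simpa [dot_apply, Pi.single_apply] using this

lemma finrank_orth (W : Submodule (ZMod 2) (D → ZMod 2)) :
    Module.finrank (ZMod 2) (dot.orthogonal W) = Fintype.card D - Module.finrank (ZMod 2) W := by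
  rw [LinearMap.BilinForm.finrank_orthogonal dot_nondeg, Module.finrank_pi]

lemma orth_invol (M : CombMap D) : dot.orthogonal (Inv M.inv) = Inv M.inv := by
  ext f
  rw [LinearMap.BilinForm.mem_orthogonal_iff]
  constructor
  · intro h d
    have h1 : (Pi.single d 1 + Pi.single (M.inv d) 1 : D → ZMod 2) ∈ Inv M.inv := by
      intro e
      have e1 : M.inv e = d ↔ e = M.inv d :=
        ⟨fun h => by rw [← h, M.inv_invol], fun h => by rw [h, M.inv_invol]⟩
      have e2 : M.inv e = M.inv d ↔ e = d := M.inv.injective.eq_iff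
      simp only [Pi.add_apply, Pi.single_apply, e1, e2]
      exact add_comm _ _
    have := h _ h1
    simp [dot_apply, Pi.single_apply, add_mul, Finset.sum_add_distrib] at this
    have := CharTwo.add_eq_zero.1 this
    exact this.symm
  · intro hf a ha
    rw [dot_apply]
    refine Finset.sum_involution (fun d _ => M.inv d) ?_ ?_ ?_ ?_
    · intro d _; rw [hf d, ha d]; exact CharTwo.add_self_eq_zero _
    · intro d _ _; exact M.inv_ne d
    · intro d _; exact Finset.mem_univ _
    · intro d _; exact M.inv_invol d

lemma const_finrank (M : CombMap D) (hconn : M.Connected) (v₀ : D) :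
    Module.finrank (ZMod 2) (Inv M.rot ⊓ Inv M.inv : Submodule (ZMod 2) (D → ZMod 2)) = 1 := by
  have hc : ∀ f ∈ (Inv M.rot ⊓ Inv M.inv : Submodule (ZMod 2) (D → ZMod 2)), ∀ d, f d = f v₀ := by
    rintro f ⟨h1, h2⟩ d
    have := hconn v₀ d
    unfold CombMap.ReachAvoiding at this
    induction this with
    | refl => rfl
    | tail _ h ih =>
      rcases h.1 with h | h
      · rw [h, ← ih]; exact h1 _
      · rw [h, ← ih]; exact h2 _
  refine finrank_eq_one (⟨fun _ => 1, fun _ => rfl, fun _ => rfl⟩) ?_ ?_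
  · intro h
    have := congrFun (congrArg Subtype.val h) v₀
    simp at this
  · rintro ⟨f, hf⟩
    refine ⟨f v₀, ?_⟩
    apply Subtype.ext
    funext d
    simp [hc f hf d]

/-- Z/2 homology vanishes for planar maps. -/
lemma planar_boundary (M : CombMap D) (hconn : M.Connected) (hpl : M.EulerPlanar) (v₀ : D)
    (g : D → ZMod 2) (hg : ∀ d, g (M.inv d) = g d)
    (hg2 : ∀ r : D → ZMod 2, (∀ d, r (M.rot d) = r d) → ∑ d, r d * g d = 0) :
    ∃ f : D → ZMod 2, (∀ d, f (M.rot d) = f (M.inv d)) ∧ ∀ d, g d = f d + f (M.inv d) := by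
  let A := Inv M.rot
  let B := Inv M.inv
  let C := Inv (M.rot * M.inv)
  have hC : ∀ f ∈ C, ∀ d, f (M.rot d) = f (M.inv d) := by
    intro f hf d
    have := hf (M.inv d)
    rwa [Equiv.Perm.mul_apply, M.inv_invol] at this
  let L : (D → ZMod 2) →ₗ[ZMod 2] (D → ZMod 2) :=
    LinearMap.id + LinearMap.funLeft (ZMod 2) (ZMod 2) M.inv
  have hL : ∀ f d, L f d = f d + f (M.inv d) := fun f d => rfl
  let LC := L.domRestrict C
  have hker : Module.finrank (ZMod 2) (LinearMap.ker LC) = 1 := by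
    rw [← const_finrank M hconn v₀]
    have : (LinearMap.ker LC).map C.subtype = A ⊓ B := by
      ext f
      constructor
      · rintro ⟨⟨f, hf⟩, hk, rfl⟩
        have h2 : ∀ d, f (M.inv d) = f d := by
          intro d
          have : L f d = 0 := congrFun hk d
          rw [hL] at this
          exact (CharTwo.add_eq_zero.1 this).symm
        refine ⟨fun d => ?_, h2⟩
        change f (M.rot d) = f d
        rw [hC f hf, h2]
      · rintro ⟨h1, h2⟩
        have hf : f ∈ C := by
          intro d
          rw [Equiv.Perm.mul_apply, h1, h2]
        refine ⟨⟨f, hf⟩, ?_, rfl⟩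
        change L f = 0
        funext d
        rw [hL, h2 d]; exact CharTwo.add_self_eq_zero _
    change _ = Module.finrank (ZMod 2) (A ⊓ B : Submodule (ZMod 2) (D → ZMod 2))
    rw [← this]
    exact (LinearEquiv.finrank_eq (Submodule.equivMapOfInjective _ C.injective_subtype _))
  have hrk := LC.finrank_range_add_finrank_ker
  let Z := dot.orthogonal (A ⊔ B)
  have hle : LinearMap.range LC ≤ Z := by
    rintro _ ⟨⟨f, hf⟩, rfl⟩
    change L f ∈ Z
    have hB : L f ∈ B := by
      intro d; rw [hL, hL, M.inv_invol, add_comm]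
    have hA : L f ∈ dot.orthogonal A := by
      rw [LinearMap.BilinForm.mem_orthogonal_iff]
      intro a ha
      rw [dot_apply]
      have e1 : ∑ d, a d * f (M.inv d) = ∑ d, a d * f d := by
        rw [← Equiv.sum_comp M.rot (fun d => a d * f d)]
        refine Finset.sum_congr rfl fun d _ => ?_
        rw [ha d, hC f hf]
      simp only [hL, mul_add, Finset.sum_add_distrib, e1]
      exact CharTwo.add_self_eq_zero _
    rw [show B = dot.orthogonal B from (orth_invol M).symm,
      LinearMap.BilinForm.mem_orthogonal_iff] at hB
    rw [LinearMap.BilinForm.mem_orthogonal_iff] at hA ⊢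
    intro n hn
    obtain ⟨x, hx, y, hy, rfl⟩ := Submodule.mem_sup.1 hn
    have h1 := hA x hx
    have h2 := hB y hy
    rw [map_add, LinearMap.add_apply, h1, h2, add_zero]
  have hgZ : g ∈ Z := by
    have hB : g ∈ B := hg
    rw [show B = dot.orthogonal B from (orth_invol M).symm,
      LinearMap.BilinForm.mem_orthogonal_iff] at hB
    rw [LinearMap.BilinForm.mem_orthogonal_iff]
    intro n hn
    obtain ⟨x, hx, y, hy, rfl⟩ := Submodule.mem_sup.1 hn
    have h1 : dot x g = 0 := hg2 x hx
    have h2 := hB y hy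
    rw [map_add, LinearMap.add_apply, h1, h2, add_zero]
  have hZ : Module.finrank (ZMod 2) Z = _ := finrank_orth (A ⊔ B)
  have hBB := finrank_orth (Inv M.inv)
  rw [orth_invol] at hBB
  have hsup := Submodule.finrank_sup_add_finrank_inf_eq A B
  have hinf : Module.finrank (ZMod 2) (A ⊓ B : Submodule (ZMod 2) (D → ZMod 2)) = 1 :=
    const_finrank M hconn v₀
  have hV : Module.finrank (ZMod 2) A = M.vertexCount := finrank_Inv M.rot
  have hE : Module.finrank (ZMod 2) B = M.edgeCount := finrank_Inv M.inv
  have hF : Module.finrank (ZMod 2) C = M.faceCount := finrank_Inv (M.rot * M.inv)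
  have hb1 : Module.finrank (ZMod 2) B ≤ Fintype.card D := by
    have := Submodule.finrank_le B
    rwa [Module.finrank_pi] at this
  have hb2 : Module.finrank (ZMod 2) (A ⊔ B : Submodule (ZMod 2) (D → ZMod 2)) ≤ Fintype.card D := by
    have := Submodule.finrank_le (A ⊔ B)
    rwa [Module.finrank_pi] at this
  have hBB' : Module.finrank (ZMod 2) B = Fintype.card D - Module.finrank (ZMod 2) B := hBB
  unfold CombMap.EulerPlanar at hpl
  have heq : LinearMap.range LC = Z := by
    apply Submodule.eq_of_le_of_finrank_eq hle
    omega
  rw [← heq] at hgZ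
  obtain ⟨⟨f, hf⟩, rfl⟩ := hgZ
  exact ⟨f, hC f hf, fun d => rfl⟩

end inv

section circ
variable {D : Type} [Fintype D] [DecidableEq D] (M : CombMap D)

lemma closed_iff (s : Set D) :
    M.ClosedTC s ↔ ∀ x ∈ s, M.rot (M.rot x) ∈ s ∧ M.inv x ∈ s := by
  unfold CombMap.ClosedTC CombMap.threadStep
  constructor
  · intro h x hx
    refine ⟨?_, (h x hx).2⟩
    have := (h _ (h x hx).2).1
    rwa [M.inv_invol] at this
  · intro h x hx
    exact ⟨(h _ (h x hx).2).1, (h x hx).2⟩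

variable {M}

lemma closed_inter {s t : Set D} (hs : M.ClosedTC s) (ht : M.ClosedTC t) : M.ClosedTC (s ∩ t) :=
  fun x hx => ⟨⟨(hs x hx.1).1, (ht x hx.2).1⟩, ⟨(hs x hx.1).2, (ht x hx.2).2⟩⟩

lemma closed_compl (h4 : ∀ d, M.rot (M.rot (M.rot (M.rot d))) = d) {s : Set D}
    (hs : M.ClosedTC s) : M.ClosedTC sᶜ := by
  rw [closed_iff] at *
  intro x hx
  refine ⟨fun h => hx ?_, fun h => hx ?_⟩
  · have := (hs _ h).1; rwa [h4] at this
  · have := (hs _ h).2; rwa [M.inv_invol] at this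

lemma circ_unique {s t : Set D} (hs : M.Circuit s) (ht : M.Circuit t) {x : D}
    (h1 : x ∈ s) (h2 : x ∈ t) : s = t := by
  have hc := closed_inter hs.2.1 ht.2.1
  rw [← hs.2.2 _ Set.inter_subset_left ⟨x, h1, h2⟩ hc]
  exact ht.2.2 _ Set.inter_subset_right ⟨x, h1, h2⟩ hc

lemma circ_sub {s t : Set D} (hs : M.Circuit s) (ht : M.ClosedTC t) {x : D}
    (h1 : x ∈ s) (h2 : x ∈ t) : s ⊆ t := by
  have hc := closed_inter hs.2.1 ht
  rw [← hs.2.2 _ Set.inter_subset_left ⟨x, h1, h2⟩ hc]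
  exact Set.inter_subset_right

lemma circ_exists (h4 : ∀ d, M.rot (M.rot (M.rot (M.rot d))) = d) (x : D) :
    ∃ s, M.Circuit s ∧ x ∈ s := by
  have hx : x ∈ ⋂₀ {t | M.ClosedTC t ∧ x ∈ t} := fun t ht => ht.2
  have hc : M.ClosedTC (⋂₀ {t | M.ClosedTC t ∧ x ∈ t}) := fun y hy =>
    ⟨fun t ht => (ht.1 y (hy t ht)).1, fun t ht => (ht.1 y (hy t ht)).2⟩
  refine ⟨_, ⟨⟨x, hx⟩, hc, ?_⟩, hx⟩
  intro t ht ⟨y, hy⟩ htc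
  by_cases hxt : x ∈ t
  · exact ht.antisymm (Set.sInter_subset_of_mem ⟨htc, hxt⟩)
  · exact absurd hy (ht hy tᶜ ⟨closed_compl h4 htc, hxt⟩)

/-- circuits avoiding the vertex of `v₀` on side `b` -/
def side (M : CombMap D) (P : D → Bool) (v₀ : D) (b : Bool) : Set (Set D) :=
  {s | M.Circuit s ∧ (∀ d ∈ s, ¬ M.rot.SameCycle v₀ d) ∧ ∀ d ∈ s, P d = b}

lemma sc_rot {v₀ d : D} : M.rot.SameCycle v₀ (M.rot d) ↔ M.rot.SameCycle v₀ d :=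
  Equiv.Perm.sameCycle_apply_right

lemma side_count (P : D → Bool) (v₀ : D) (b : Bool)
    [Fintype {d : D // P d = b ∨ M.rot.SameCycle v₀ d}]
    [DecidableEq {d : D // P d = b ∨ M.rot.SameCycle v₀ d}]
    (M' : CombMap {d : D // P d = b ∨ M.rot.SameCycle v₀ d})
    (hrot : ∀ d, ((M'.rot d) : D) = M.rot (d : D))
    (hinv : ∀ d : {d : D // P d = b ∨ M.rot.SameCycle v₀ d}, P (d : D) = b → ((M'.inv d) : D) = M.inv (d : D))
    (s₀ : Set {d : D // P d = b ∨ M.rot.SameCycle v₀ d}) (hs₀ : M'.Circuit s₀)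
    (hone : ∀ d : {d : D // P d = b ∨ M.rot.SameCycle v₀ d}, M.rot.SameCycle v₀ d → d ∈ s₀) :
    M'.circuitCount = (side M P v₀ b).ncard + 1 := by
  classical
  set X := {s | M'.Circuit s ∧ ∀ d ∈ s, ¬ M.rot.SameCycle v₀ (d : D)} with hX
  have hv₀ : (⟨v₀, Or.inr (Equiv.Perm.SameCycle.refl _ _)⟩ :
      {d : D // P d = b ∨ M.rot.SameCycle v₀ d}) ∈ s₀ := hone _ (Equiv.Perm.SameCycle.refl _ _)
  have e1 : {s | M'.Circuit s} = insert s₀ X := by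
    ext s
    constructor
    · intro hs
      by_cases h : ∀ d ∈ s, ¬ M.rot.SameCycle v₀ (d : D)
      · exact Or.inr ⟨hs, h⟩
      · push Not at h
        obtain ⟨d, hd, hdc⟩ := h
        exact Or.inl (circ_unique hs hs₀ hd (hone d hdc))
    · rintro (rfl | h)
      · exact hs₀
      · exact h.1
  have e2 : s₀ ∉ X := fun h => h.2 _ hv₀ (Equiv.Perm.SameCycle.refl _ _)
  have key : ∀ t : Set {d : D // P d = b ∨ M.rot.SameCycle v₀ d},
      (∀ d ∈ t, ¬ M.rot.SameCycle v₀ (d : D)) →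
      (M'.ClosedTC t ↔ M.ClosedTC (Subtype.val '' t)) := by
    intro t ht
    rw [closed_iff, closed_iff]
    have a1 : ∀ x ∈ t, M.inv (x : D) = M'.inv x := fun x hx =>
      (hinv x (x.2.resolve_right (ht x hx))).symm
    constructor
    · rintro h _ ⟨x, hx, rfl⟩
      refine ⟨⟨_, (h x hx).1, by rw [hrot, hrot]⟩, ⟨_, (h x hx).2, (a1 x hx).symm⟩⟩
    · intro h x hx
      obtain ⟨⟨y, hy, hy'⟩, ⟨z, hz, hz'⟩⟩ := h _ ⟨x, hx, rfl⟩
      rw [← hrot, ← hrot] at hy'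
      rw [a1 x hx] at hz'
      rw [← Subtype.ext hy', ← Subtype.ext hz']
      exact ⟨hy, hz⟩
  have e3 : side M P v₀ b = (fun t : Set {d : D // P d = b ∨ M.rot.SameCycle v₀ d} =>
      (Subtype.val '' t : Set D)) '' X := by
    ext s
    constructor
    · rintro ⟨⟨hne, hcl, hmin⟩, hc, hP⟩
      have hs : Subtype.val '' (Subtype.val ⁻¹' s :
          Set {d : D // P d = b ∨ M.rot.SameCycle v₀ d}) = s := by
        rw [Set.image_preimage_eq_iff]
        exact fun d hd => ⟨⟨d, Or.inl (hP d hd)⟩, rfl⟩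
      refine ⟨Subtype.val ⁻¹' s, ⟨⟨?_, ?_, ?_⟩, fun d hd => hc _ hd⟩, hs⟩
      · rw [← hs] at hne; exact hne.of_image
      · refine (key (Subtype.val ⁻¹' s) (fun d hd => hc _ hd)).2 ?_
        rw [hs]; exact hcl
      · intro t ht htn htc
        have := hmin (Subtype.val '' t) (Set.image_subset_iff.2 ht) (htn.image _)
          ((key t (fun d hd => hc _ (ht hd))).1 htc)
        rw [← this, Set.preimage_image_eq _ Subtype.val_injective]
    · rintro ⟨t, ⟨⟨hne, hcl, hmin⟩, hc⟩, rfl⟩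
      refine ⟨⟨hne.image _, (key t hc).1 hcl, ?_⟩, ?_, ?_⟩
      · intro u hu hun huc
        have hs : Subtype.val '' (Subtype.val ⁻¹' u :
            Set {d : D // P d = b ∨ M.rot.SameCycle v₀ d}) = u := by
          rw [Set.image_preimage_eq_iff]
          intro d hd
          obtain ⟨y, _, rfl⟩ := hu hd
          exact ⟨y, rfl⟩
        have hsub : (Subtype.val ⁻¹' u :
            Set {d : D // P d = b ∨ M.rot.SameCycle v₀ d}) ⊆ t := by
          intro d hd
          obtain ⟨y, hy, hyd⟩ := hu hd
          rwa [← Subtype.ext hyd]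
        have := hmin _ hsub (by rw [← hs] at hun; exact hun.of_image)
          ((key _ (fun d hd => hc d (hsub hd))).2 (by rw [hs]; exact huc))
        change u = Subtype.val '' t
        rw [← this, hs]
      · rintro _ ⟨x, hx, rfl⟩; exact hc x hx
      · rintro _ ⟨x, hx, rfl⟩; exact x.2.resolve_right (hc x hx)
  unfold CombMap.circuitCount
  rw [e1, Set.ncard_insert_of_notMem e2, e3,
    Set.ncard_image_of_injective _ (Set.image_injective.2 Subtype.val_injective)]

lemma total_count (h4 : M.FourRegular) (P : D → Bool) (v₀ : D)
    (hedge : ∀ d, P (M.inv d) = P d)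
    (hvert : ∀ d e, M.rot.SameCycle d e → ¬ M.rot.SameCycle v₀ d → P d = P e)
    (s₀ : Set D) (hs₀ : M.Circuit s₀) (hone : ∀ d, M.rot.SameCycle v₀ d → d ∈ s₀) :
    M.circuitCount = (side M P v₀ true).ncard + (side M P v₀ false).ncard + 1 := by
  classical
  have e1 : {s | M.Circuit s} = insert s₀ (side M P v₀ true ∪ side M P v₀ false) := by
    ext s
    constructor
    · intro hs
      by_cases h : ∀ d ∈ s, ¬ M.rot.SameCycle v₀ d
      · right
        have hb : ∀ b, M.ClosedTC (s ∩ {d | P d = b}) := by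
          intro b
          have hc := hs.2.1
          rw [closed_iff] at *
          rintro x ⟨hx, hxb⟩
          refine ⟨⟨(hc x hx).1, ?_⟩, ⟨(hc x hx).2, (hedge x).trans hxb⟩⟩
          change P (M.rot (M.rot x)) = b
          rw [← hvert x _ _ (h x hx)]
          · exact hxb
          · rw [sc_rot, sc_rot]
        obtain ⟨x, hx⟩ := hs.1
        have : s ∈ side M P v₀ (P x) :=
          ⟨hs, h, fun d hd => (circ_sub hs (hb (P x)) hx ⟨hx, rfl⟩ hd).2⟩
        rcases hP : P x with _ | _
        · right; rwa [hP] at this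
        · left; rwa [hP] at this
      · push Not at h
        obtain ⟨d, hd, hdc⟩ := h
        exact Or.inl (circ_unique hs hs₀ hd (hone d hdc))
    · rintro (rfl | h | h)
      · exact hs₀
      · exact h.1
      · exact h.1
  have hr := Equiv.Perm.SameCycle.refl M.rot v₀
  have e2 : s₀ ∉ side M P v₀ true ∪ side M P v₀ false := by
    rintro (h | h)
    · exact h.2.1 _ (hone _ hr) hr
    · exact h.2.1 _ (hone _ hr) hr
  have e3 : Disjoint (side M P v₀ true) (side M P v₀ false) := by
    rw [Set.disjoint_left]
    intro s h1 h2
    obtain ⟨x, hx⟩ := h1.1.1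
    have := h1.2.2 x hx
    rw [h2.2.2 x hx] at this
    exact absurd this (by decide)
  unfold CombMap.circuitCount
  rw [e1, Set.ncard_insert_of_notMem e2, Set.ncard_union_eq e3]

lemma sc_cases (h4 : M.FourRegular) {v d : D} (h : M.rot.SameCycle v d) :
    d = v ∨ d = M.rot v ∨ d = M.rot (M.rot v) ∨ d = M.rot (M.rot (M.rot v)) := by
  obtain ⟨n, rfl⟩ := h.exists_nat_pow_eq
  induction n with
  | zero => left; rfl
  | succ n ih =>
    rw [pow_succ', Equiv.Perm.mul_apply]
    rcases ih ⟨n, by simp⟩ with h | h | h | h <;> rw [h]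
    · simp
    · simp
    · simp
    · rw [h4.1]; simp

/-- alternating pattern at the cut vertex contradicts planarity -/
lemma no_alternating (h4 : M.FourRegular) (hconn : M.Connected) (hpl : M.EulerPlanar)
    (P : D → Bool) (hedge : ∀ d, P (M.inv d) = P d) (a : D)
    (hvert : ∀ d, ¬ M.rot.SameCycle a d → P (M.rot d) = P d)
    (p0 : P a = true) (p1 : P (M.rot a) = false) (p2 : P (M.rot (M.rot a)) = true)
    (p3 : P (M.rot (M.rot (M.rot a))) = false) : False := by
  classical
  have hPP : ∀ d, P (M.rot (M.rot d)) = P d := by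
    intro d
    by_cases h : M.rot.SameCycle a d
    · rcases sc_cases h4 h with rfl | rfl | rfl | rfl
      · rw [p0, p2]
      · rw [p1, p3]
      · rw [h4.1, p0, p2]
      · rw [h4.1, p1, p3]
    · rw [hvert _ (by rwa [sc_rot]), hvert _ h]
  obtain ⟨f, hf1, hf2⟩ := planar_boundary M hconn hpl a (fun d => if P d then 1 else 0)
    (fun d => by simp only [hedge]) (by
      intro r hr
      refine Finset.sum_involution (fun d _ => M.rot (M.rot d)) ?_ ?_ ?_ ?_
      · intro d _
        simp only [hPP, hr]; exact CharTwo.add_self_eq_zero _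
      · intro d _ _; exact h4.2.2 d
      · intro d _; exact Finset.mem_univ _
      · intro d _; exact h4.1 d)
  have hT : ∀ d, P d = true → f (M.rot d) = f d + 1 := by
    intro d hd
    have := hf2 d
    rw [hf1]
    simp only [hd, if_true] at this
    rw [this, ← add_assoc, CharTwo.add_self_eq_zero, zero_add]
  have hF : ∀ d, P d = false → f (M.rot d) = f d ∧ f (M.inv d) = f d := by
    intro d hd
    have := hf2 d
    rw [hf1]
    simp [hd] at this
    have := (CharTwo.add_eq_zero.1 this.symm).symm
    exact ⟨this, this⟩
  set b := M.rot a with hb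
  have hfb' : f (M.rot (M.rot b)) = f b + 1 := by
    rw [hT _ p2, (hF _ p1).1]
  let T : Finset D := Finset.univ.filter (fun d => P d = false ∧ f d = f b)
  have hbT : b ∈ T := by simp [T, p1]
  have E1 : Even T.card := by
    refine even_of_invol T M.inv ?_ (fun d _ => M.inv_ne d) (fun d _ => M.inv_invol d)
    intro d hd
    simp only [T, Finset.mem_filter, Finset.mem_univ, true_and] at hd ⊢
    exact ⟨(hedge d).trans hd.1, (hF d hd.1).2.trans hd.2⟩
  have E2 : Even (T.erase b).card := by
    refine even_of_invol _ (fun d => M.rot (M.rot d)) ?_ (fun d _ => h4.2.2 d) (fun d _ => h4.1 d)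
    intro d hd
    simp only [T, Finset.mem_erase, Finset.mem_filter, Finset.mem_univ, true_and] at hd ⊢
    obtain ⟨hdb, hPd, hfd⟩ := hd
    have hnc : ¬ M.rot.SameCycle a d := by
      intro h
      rcases sc_cases h4 h with rfl | rfl | rfl | rfl
      · rw [p0] at hPd; cases hPd
      · exact hdb rfl
      · rw [p2] at hPd; cases hPd
      · rw [hfb'] at hfd; simp at hfd
    refine ⟨?_, (hPP d).trans hPd, ?_⟩
    · intro h
      apply hnc
      rw [← sc_rot, ← sc_rot, h, sc_rot]
    · rw [(hF _ ((hvert d hnc).trans hPd)).1, (hF _ hPd).1, hfd]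
  rw [Finset.card_erase_of_mem hbT] at E2
  have : 0 < T.card := Finset.card_pos.2 ⟨b, hbT⟩
  rcases E1 with ⟨x, hx⟩
  rcases E2 with ⟨y, hy⟩
  omega

/-- adjacent pattern: one circuit passes twice through the cut vertex -/
lemma adjacent_one (h4 : M.FourRegular)
    (P : D → Bool) (hedge : ∀ d, P (M.inv d) = P d) (a : D)
    (hvert : ∀ d, ¬ M.rot.SameCycle a d → P (M.rot d) = P d)
    (p0 : P a = true) (p1 : P (M.rot a) = true) (p2 : P (M.rot (M.rot a)) = false)
    (p3 : P (M.rot (M.rot (M.rot a))) = false) :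
    ∃ s, M.Circuit s ∧ ∀ d, M.rot.SameCycle a d → d ∈ s := by
  classical
  obtain ⟨s, hs, has⟩ := circ_exists h4.1 a
  have hc := (closed_iff M s).1 hs.2.1
  have hbs : M.rot a ∈ s := by
    by_contra hbs
    let T : Finset D := Finset.univ.filter (fun d => P d = true ∧ d ∈ s)
    have haT : a ∈ T := by simp [T, p0, has]
    have E1 : Even T.card := by
      refine even_of_invol T M.inv ?_ (fun d _ => M.inv_ne d) (fun d _ => M.inv_invol d)
      intro d hd
      simp only [T, Finset.mem_filter, Finset.mem_univ, true_and] at hd ⊢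
      exact ⟨(hedge d).trans hd.1, (hc d hd.2).2⟩
    have E2 : Even (T.erase a).card := by
      refine even_of_invol _ (fun d => M.rot (M.rot d)) ?_ (fun d _ => h4.2.2 d)
        (fun d _ => h4.1 d)
      intro d hd
      simp only [T, Finset.mem_erase, Finset.mem_filter, Finset.mem_univ, true_and] at hd ⊢
      obtain ⟨hda, hPd, hds⟩ := hd
      have hnc : ¬ M.rot.SameCycle a d := by
        intro h
        rcases sc_cases h4 h with rfl | rfl | rfl | rfl
        · exact hda rfl
        · exact hbs hds
        · rw [p2] at hPd; cases hPd
        · rw [p3] at hPd; cases hPd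
      refine ⟨?_, ?_, (hc d hds).1⟩
      · intro h
        apply hnc
        rw [← sc_rot, ← sc_rot, h]
      · rw [hvert _ (by rwa [sc_rot]), hvert _ hnc, hPd]
    rw [Finset.card_erase_of_mem haT] at E2
    have : 0 < T.card := Finset.card_pos.2 ⟨a, haT⟩
    rcases E1 with ⟨x, hx⟩
    rcases E2 with ⟨y, hy⟩
    omega
  refine ⟨s, hs, fun d hd => ?_⟩
  rcases sc_cases h4 hd with rfl | rfl | rfl | rfl
  · exact has
  · exact hbs
  · exact (hc _ has).1
  · exact (hc _ hbs).1

/-- in a side map all darts at the cut vertex lie on one circuit -/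
lemma side_one (h4 : M.FourRegular) (P : D → Bool) (v₀ : D) (b : Bool)
    [Fintype {d : D // P d = b ∨ M.rot.SameCycle v₀ d}]
    [DecidableEq {d : D // P d = b ∨ M.rot.SameCycle v₀ d}]
    (M' : CombMap {d : D // P d = b ∨ M.rot.SameCycle v₀ d})
    (hrot : ∀ d, ((M'.rot d) : D) = M.rot (d : D))
    (a : D) (ha : M.rot.SameCycle v₀ a)
    (p0 : P a = b) (p1 : P (M.rot a) = b) (p2 : P (M.rot (M.rot a)) = !b)
    (hinv : ∀ d : {d : D // P d = b ∨ M.rot.SameCycle v₀ d}, P (d : D) = (!b) → P (M'.inv d : D) = (!b) ∧ M'.inv d ≠ d ∧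
      M.rot.SameCycle v₀ (M'.inv d : D)) :
    ∃ s, M'.Circuit s ∧ ∀ d : {d : D // P d = b ∨ M.rot.SameCycle v₀ d},
      M.rot.SameCycle v₀ d → d ∈ s := by
  have h4' : ∀ d, M'.rot (M'.rot (M'.rot (M'.rot d))) = d := by
    intro d; apply Subtype.ext; simp only [hrot, h4.1]
  let a' : {d : D // P d = b ∨ M.rot.SameCycle v₀ d} := ⟨a, Or.inr ha⟩
  obtain ⟨s, hs, has⟩ := circ_exists h4' a'
  have hc := (closed_iff M' s).1 hs.2.1
  have h2 := (hc _ has).1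
  have h3 := (hc _ h2).2
  have hv2 : ((M'.rot (M'.rot a') : {d : D // P d = b ∨ M.rot.SameCycle v₀ d}) : D)
    = M.rot (M.rot a) := by simp only [hrot, a']
  obtain ⟨q1, q2, q3⟩ := hinv (M'.rot (M'.rot a')) (by rw [hv2]; exact p2)
  have hv3 : M'.inv (M'.rot (M'.rot a')) = M'.rot (M'.rot (M'.rot a')) := by
    rcases sc_cases h4 (ha.symm.trans q3) with h | h | h | h
    · rw [h, p0] at q1; simp at q1
    · rw [h, p1] at q1; simp at q1
    · exact absurd (Subtype.ext (h.trans hv2.symm)) q2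
    · apply Subtype.ext; rw [h, hrot, hv2]
  rw [hv3] at h3
  have h5 := (hc _ h3).1
  rw [h4'] at h5
  refine ⟨s, hs, fun d hd => ?_⟩
  rcases sc_cases h4 (ha.symm.trans hd) with h | h | h | h
  · have : d = a' := Subtype.ext h
    rwa [this]
  · have : d = M'.rot a' := Subtype.ext (by rw [h, hrot])
    rwa [this]
  · have : d = M'.rot (M'.rot a') := Subtype.ext (by rw [h, hv2])
    rwa [this]
  · have : d = M'.rot (M'.rot (M'.rot a')) := Subtype.ext (by rw [h, hrot, hv2])
    rwa [this]

end circ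
end CutHelp

/-- Let `G` be a connected 4-regular plane graph with a
cutpoint `c` (the vertex of dart `v₀`) separating `G₁` (darts with `P = true`)
from `G₂` (darts with `P = false`). Let `G'₁` be `G₁` with a loop added at `c`
(its darts are the `true` darts together with the darts at `c`, the two `false`
darts at `c` forming the new loop), with the embedding induced from `G`;
similarly `G'₂`. If `C`, `C₁`, `C₂` are the threaded circuit partitions of
`G`, `G'₁`, `G'₂`, then `|C| = |C₁| + |C₂| - 1`. -/
theorem cutpoint_circuit_count
    {D : Type} [Fintype D] [DecidableEq D] (M : CombMap D)
    (h4 : M.FourRegular) (hconn : M.Connected) (hpl : M.EulerPlanar)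
    (P : D → Bool) (v₀ : D)
    (hedge : ∀ d, P (M.inv d) = P d)
    (hvert : ∀ d e, M.rot.SameCycle d e → ¬ M.rot.SameCycle v₀ d → P d = P e)
    (h1 : ∃ d, M.rot.SameCycle v₀ d ∧ P d = true)
    (h2 : ∃ d, M.rot.SameCycle v₀ d ∧ P d = false)
    (M₁ : CombMap {d : D // P d = true ∨ M.rot.SameCycle v₀ d})
    (M₂ : CombMap {d : D // P d = false ∨ M.rot.SameCycle v₀ d})
    (hrot1 : ∀ d : {d : D // P d = true ∨ M.rot.SameCycle v₀ d}, ((M₁.rot d) : D) = M.rot (d : D))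
    (hrot2 : ∀ d : {d : D // P d = false ∨ M.rot.SameCycle v₀ d}, ((M₂.rot d) : D) = M.rot (d : D))
    (hinv1 : ∀ d : {d : D // P d = true ∨ M.rot.SameCycle v₀ d}, (P (d : D) = true → ((M₁.inv d) : D) = M.inv (d : D)) ∧
      (P (d : D) = false → P ((M₁.inv d) : D) = false ∧ M₁.inv d ≠ d ∧
        M.rot.SameCycle v₀ ((M₁.inv d) : D)))
    (hinv2 : ∀ d : {d : D // P d = false ∨ M.rot.SameCycle v₀ d}, (P (d : D) = false → ((M₂.inv d) : D) = M.inv (d : D)) ∧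
      (P (d : D) = true → P ((M₂.inv d) : D) = true ∧ M₂.inv d ≠ d ∧
        M.rot.SameCycle v₀ ((M₂.inv d) : D))) :
    (M.circuitCount : ℤ) = (M₁.circuitCount : ℤ) + (M₂.circuitCount : ℤ) - 1 := by
  classical
  have hr0 := Equiv.Perm.SameCycle.refl M.rot v₀
  have c1 : M.rot.SameCycle v₀ (M.rot v₀) := CutHelp.sc_rot.2 hr0
  have c2 : M.rot.SameCycle v₀ (M.rot (M.rot v₀)) := CutHelp.sc_rot.2 c1
  have c3 : M.rot.SameCycle v₀ (M.rot (M.rot (M.rot v₀))) := CutHelp.sc_rot.2 c2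
  -- another dart with the same colour
  have oth : ∀ d, M.rot.SameCycle v₀ d → ∃ e, M.rot.SameCycle v₀ e ∧ e ≠ d ∧ P e = P d := by
    intro d hd
    rcases hP : P d with _ | _
    · obtain ⟨q1, q2, q3⟩ := (hinv1 ⟨d, Or.inr hd⟩).2 hP
      exact ⟨_, q3, fun h => q2 (Subtype.ext h), q1⟩
    · obtain ⟨q1, q2, q3⟩ := (hinv2 ⟨d, Or.inr hd⟩).2 hP
      exact ⟨_, q3, fun h => q2 (Subtype.ext h), q1⟩
  have ex : ∃ a, M.rot.SameCycle v₀ a ∧ P a = true ∧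
      ((P (M.rot a) = false ∧ P (M.rot (M.rot a)) = true ∧ P (M.rot (M.rot (M.rot a))) = false) ∨
       (P (M.rot a) = true ∧ P (M.rot (M.rot a)) = false ∧
        P (M.rot (M.rot (M.rot a))) = false)) := by
    -- choose a true dart, then its neighbours
    obtain ⟨t, ht, hPt⟩ := h1
    obtain ⟨u, hu, hPu⟩ := h2
    have t1 : M.rot.SameCycle v₀ (M.rot t) := CutHelp.sc_rot.2 ht
    have t2 : M.rot.SameCycle v₀ (M.rot (M.rot t)) := CutHelp.sc_rot.2 t1
    have t3 : M.rot.SameCycle v₀ (M.rot (M.rot (M.rot t))) := CutHelp.sc_rot.2 t2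
    have all : ∀ e, M.rot.SameCycle v₀ e → e = t ∨ e = M.rot t ∨ e = M.rot (M.rot t) ∨
        e = M.rot (M.rot (M.rot t)) := fun e he => CutHelp.sc_cases h4 (ht.symm.trans he)
    have o0 := oth _ ht
    have o1 := oth _ t1
    have o2 := oth _ t2
    have o3 := oth _ t3
    have four := h4.1 t
    rcases e1 : P (M.rot t) with _ | _ <;> rcases e2 : P (M.rot (M.rot t)) with _ | _ <;>
      rcases e3 : P (M.rot (M.rot (M.rot t))) with _ | _
    · exfalso
      obtain ⟨e, he, hne, hPe⟩ := o0
      rcases all e he with rfl | rfl | rfl | rfl <;> simp_all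
    · exact ⟨_, t3, e3, Or.inr ⟨by rw [four]; exact hPt, by rw [four]; exact e1,
        by rw [four]; exact e2⟩⟩
    · exact ⟨t, ht, hPt, Or.inl ⟨e1, e2, e3⟩⟩
    · exfalso
      obtain ⟨e, he, hne, hPe⟩ := o1
      rcases all e he with rfl | rfl | rfl | rfl <;> simp_all
    · exact ⟨t, ht, hPt, Or.inr ⟨e1, e2, e3⟩⟩
    · exfalso
      obtain ⟨e, he, hne, hPe⟩ := o2
      rcases all e he with rfl | rfl | rfl | rfl <;> simp_all
    · exfalso
      obtain ⟨e, he, hne, hPe⟩ := o3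
      rcases all e he with rfl | rfl | rfl | rfl <;> simp_all
    · exfalso
      rcases all u hu with rfl | rfl | rfl | rfl <;> simp_all
  obtain ⟨a, ha, p0, hpat⟩ := ex
  have hv : ∀ d, ¬ M.rot.SameCycle a d → P (M.rot d) = P d := by
    intro d hd
    exact (hvert d _ (CutHelp.sc_rot.2 (Equiv.Perm.SameCycle.refl _ _))
      (fun h => hd (ha.symm.trans h))).symm
  rcases hpat with ⟨p1, p2, p3⟩ | ⟨p1, p2, p3⟩
  · exact (CutHelp.no_alternating h4 hconn hpl P hedge a hv p0 p1 p2 p3).elim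
  · obtain ⟨s, hs, hsc⟩ := CutHelp.adjacent_one h4 P hedge a hv p0 p1 p2 p3
    have hT := CutHelp.total_count h4 P v₀ hedge hvert s hs
      (fun d hd => hsc d (ha.symm.trans hd))
    obtain ⟨s1, hs1, hc1⟩ := CutHelp.side_one h4 P v₀ true M₁ hrot1 a ha p0 p1 p2
      (fun d => (hinv1 d).2)
    have hN1 := CutHelp.side_count P v₀ true M₁ hrot1 (fun d => (hinv1 d).1) s1 hs1 hc1
    obtain ⟨s2, hs2, hc2⟩ := CutHelp.side_one h4 P v₀ false M₂ hrot2 (M.rot (M.rot a))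
      (CutHelp.sc_rot.2 (CutHelp.sc_rot.2 ha)) p2 p3 (by rw [h4.1]; exact p0)
      (fun d => (hinv2 d).2)
    have hN2 := CutHelp.side_count P v₀ false M₂ hrot2 (fun d => (hinv2 d).1) s2 hs2 hc2
    rw [hT, hN1, hN2]
    push_cast
    ring
end

section
/- If G is a 2-connected 4-regular planar graph and C and C' are the threaded circuit partitions of two planar embeddings of G, then |C| = |C'|; that is, the number of threaded circuits is an invariant of the abstract graph, independent of the embedding. -/
namespace CombMap

abbrev KK := ZMod 2

/-- functions constant on the classes of a setoid -/
def InvS {D : Type} (r : Setoid D) : Submodule KK (D → KK) where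
  carrier := {f | ∀ a b, r a b → f a = f b}
  add_mem' := by
    intro f g hf hg a b h
    simp [hf a b h, hg a b h]
  zero_mem' := by intro a b _; rfl
  smul_mem' := by
    intro c f hf a b h
    simp [hf a b h]

theorem mem_InvS {D : Type} (r : Setoid D) (f : D → KK) :
    f ∈ InvS r ↔ ∀ a b, r a b → f a = f b := Iff.rfl

theorem finrank_InvS {D : Type} [Fintype D] (r : Setoid D) :
    Module.finrank KK (InvS r) = Set.ncard {s : Set D | ∃ d, s = {e | r d e}} := by
  classical
  let e : InvS r ≃ₗ[KK] (Quotient r → KK) :=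
    { toFun := fun f q => Quotient.lift f.1 f.2 q
      map_add' := by
        intro f g; funext q; induction q using Quotient.inductionOn; rfl
      map_smul' := by
        intro c f; funext q; induction q using Quotient.inductionOn; rfl
      invFun := fun g => ⟨fun d => g (Quotient.mk r d), fun a b h => by
        simp [Quotient.sound h]⟩
      left_inv := by intro f; rfl
      right_inv := by intro g; funext q; induction q using Quotient.inductionOn; rfl }
  rw [e.finrank_eq, Module.finrank_fintype_fun_eq_card, ← Nat.card_eq_fintype_card,
    Nat.card_congr (Setoid.quotientEquivClasses r), Nat.card_coe_set_eq]
  congr 1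
  ext s
  constructor
  · rintro ⟨d, rfl⟩
    exact ⟨d, by ext x; exact ⟨r.symm, r.symm⟩⟩
  · rintro ⟨d, rfl⟩
    exact ⟨d, by ext x; exact ⟨r.symm, r.symm⟩⟩

theorem sameCycle_inv {D : Type} (s : Equiv.Perm D) (f : D → KK)
    [Finite D] (h : ∀ d, f (s d) = f d) {a b : D} (hab : s.SameCycle a b) : f a = f b := by
  obtain ⟨n, rfl⟩ := hab.exists_nat_pow_eq
  clear hab
  induction n with
  | zero => rfl
  | succ n ih => rw [pow_succ', Equiv.Perm.mul_apply, h]; exact ih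

theorem mem_InvS_cycle {D : Type} [Finite D] (s : Equiv.Perm D) (f : D → KK) :
    f ∈ InvS (Equiv.Perm.SameCycle.setoid s) ↔ ∀ d, f (s d) = f d := by
  constructor
  · intro h d
    exact (h d (s d) (Equiv.Perm.sameCycle_apply_right.2 (Equiv.Perm.SameCycle.refl s d))).symm
  · intro h a b hab
    exact sameCycle_inv s f h hab

variable {D : Type} [Fintype D] [DecidableEq D] (M : CombMap D)

theorem const_of_inv (hc : M.Connected) (f : D → KK) (h1 : ∀ d, f (M.rot d) = f d)
    (h2 : ∀ d, f (M.inv d) = f d) (a b : D) : f a = f b := by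
  have := hc a b
  unfold ReachAvoiding at this
  induction this with
  | refl => rfl
  | tail _ h ih =>
    rw [ih]
    rcases h.1 with h | h
    · rw [h, h1]
    · rw [h, h2]

/-- functions on threaded circuits -/
def SFun : Submodule KK (D → KK) where
  carrier := {z | ∀ d, z (M.inv d) = z d ∧ z (M.rot (M.rot d)) = z d}
  add_mem' := by
    intro f g hf hg d
    simp [hf d, hg d]
  zero_mem' := by intro d; simp
  smul_mem' := by
    intro c f hf d
    simp [hf d]

theorem mem_SFun (z : D → KK) :
    z ∈ M.SFun ↔ ∀ d, z (M.inv d) = z d ∧ z (M.rot (M.rot d)) = z d := Iff.rfl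

def circSetoid : Setoid D where
  r a b := ∀ z ∈ M.SFun, z a = z b
  iseqv := ⟨fun _ _ _ => rfl, fun h z hz => (h z hz).symm,
    fun h h' z hz => (h z hz).trans (h' z hz)⟩

theorem InvS_circ : InvS M.circSetoid = M.SFun := by
  ext z
  constructor
  · intro h d
    exact ⟨(h d (M.inv d) fun y hy => (hy d).1.symm).symm,
      (h d (M.rot (M.rot d)) fun y hy => (hy d).2.symm).symm⟩
  · intro h a b hab
    exact hab z h

theorem closed_class (d : D) : M.ClosedTC {e | M.circSetoid d e} := by
  intro x hx
  refine ⟨fun z hz => ?_, fun z hz => ?_⟩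
  · rw [hx z hz, threadStep, (hz _).2, (hz _).1]
  · rw [hx z hz, (hz _).1]

theorem closed_ind (h4 : ∀ d, M.rot (M.rot (M.rot (M.rot d))) = d) (t : Set D) (ht : M.ClosedTC t) :
    ∃ z ∈ M.SFun, ∀ d, d ∈ t ↔ z d = 1 := by
  classical
  refine ⟨fun d => if d ∈ t then 1 else 0, ?_, fun d => by by_cases h : d ∈ t <;> simp [h]⟩
  have h1 : ∀ d, M.inv d ∈ t ↔ d ∈ t := fun d =>
    ⟨fun h => by simpa [M.inv_invol] using (ht _ h).2, fun h => (ht _ h).2⟩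
  have h2 : ∀ d, d ∈ t → M.rot (M.rot d) ∈ t := fun d h => by
    have := (ht _ (ht _ h).2).1
    simpa [threadStep, M.inv_invol] using this
  have h3 : ∀ d, M.rot (M.rot d) ∈ t ↔ d ∈ t := by
    intro d
    refine ⟨fun h => ?_, h2 d⟩
    have := h2 _ h
    rwa [h4] at this
  intro d
  simp [h1, h3]

theorem circuitCount_eq (h4 : ∀ d, M.rot (M.rot (M.rot (M.rot d))) = d) : Module.finrank KK M.SFun = M.circuitCount := by
  rw [← InvS_circ, finrank_InvS, circuitCount]
  congr 1
  ext s
  constructor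
  · rintro ⟨d, rfl⟩
    refine ⟨⟨d, M.circSetoid.refl d⟩, M.closed_class d, ?_⟩
    rintro t hts ⟨x, hx⟩ ht
    obtain ⟨z, hz, hzt⟩ := M.closed_ind h4 t ht
    refine Set.Subset.antisymm hts ?_
    intro y hy
    rw [hzt, ← hy z hz, hts hx z hz]
    exact (hzt x).1 hx
  · rintro ⟨⟨d, hd⟩, hcl, hmin⟩
    refine ⟨d, (hmin _ ?_ ⟨d, M.circSetoid.refl d⟩ (M.closed_class d)).symm⟩
    intro y hy
    obtain ⟨z, hz, hzt⟩ := M.closed_ind h4 s hcl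
    rw [hzt, ← hy z hz]
    exact (hzt d).1 hd


theorem sameCycle_four (h4 : M.FourRegular) (a x : D) : M.rot.SameCycle a x ↔
    (x = a ∨ x = M.rot a ∨ x = M.rot (M.rot a) ∨ x = M.rot (M.rot (M.rot a))) := by
  have h := h4.1
  constructor
  · intro hs
    obtain ⟨n, rfl⟩ := hs.exists_nat_pow_eq
    clear hs
    induction n with
    | zero => simp
    | succ n ih =>
      rw [pow_succ', Equiv.Perm.mul_apply]
      rcases ih with ih | ih | ih | ih <;> rw [ih] <;> simp [h]
  · have h1 := Equiv.Perm.SameCycle.refl M.rot a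
    rintro (h | h | h | h) <;> subst h <;>
      simpa only [Equiv.Perm.sameCycle_apply_right] using h1

/-- even edge functions -/
def EvenZ (y : D → KK) : Prop :=
  (∀ d, y (M.inv d) = y d) ∧
  ∀ d, y d + y (M.rot d) + y (M.rot (M.rot d)) + y (M.rot (M.rot (M.rot d))) = 0

theorem kk_add_self (a : KK) : a + a = 0 := CharTwo.add_self_eq_zero a

theorem kk_eq {a b : KK} (h : a + b = 0) : a = b := CharTwo.add_eq_zero.1 h

theorem sum_four (h4 : M.FourRegular) (h : D → KK)
    (hh : ∀ d, h d + h (M.rot d) + h (M.rot (M.rot d)) + h (M.rot (M.rot (M.rot d))) = 0) :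
    ∑ d, h d = 0 := by
  classical
  refine Finset.sum_cancels_of_partition_cancels (Equiv.Perm.SameCycle.setoid M.rot) ?_
  intro x _
  have e : (Finset.univ.filter fun a => (Equiv.Perm.SameCycle.setoid M.rot) a x) =
      {x, M.rot x, M.rot (M.rot x), M.rot (M.rot (M.rot x))} := by
    ext a
    simp only [Finset.mem_filter, Finset.mem_univ, true_and, Finset.mem_insert,
      Finset.mem_singleton]
    rw [← M.sameCycle_four h4]
    exact Equiv.Perm.sameCycle_comm
  obtain ⟨k4, k1, k2⟩ := h4
  have k3 : ∀ d, M.rot (M.rot (M.rot d)) ≠ d := by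
    intro d hd
    have := k4 d
    rw [hd] at this
    exact k1 d this
  rw [e, Finset.sum_insert, Finset.sum_insert, Finset.sum_insert, Finset.sum_singleton]
  · rw [← hh x]; ring
  · simp [(k1 _).symm]
  · simp [(k1 _).symm, (k2 _).symm]
  · simp [(k1 _).symm, (k2 _).symm, (k3 _).symm]

def BB (D : Type) [Fintype D] : LinearMap.BilinForm KK (D → KK) := dotProductBilin KK KK

theorem BB_apply {D : Type} [Fintype D] (f g : D → KK) : BB D f g = ∑ d, f d * g d := rfl

theorem BB_nondeg : (BB D).Nondegenerate := by
  constructor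
  · intro f hf
    funext d
    have := hf (Pi.single d 1)
    simpa [BB_apply, Pi.single_apply] using this
  · intro f hf
    funext d
    have := hf (Pi.single d 1)
    simpa [BB_apply, Pi.single_apply] using this

abbrev EF : Submodule KK (D → KK) := InvS (Equiv.Perm.SameCycle.setoid M.inv)
abbrev VF : Submodule KK (D → KK) := InvS (Equiv.Perm.SameCycle.setoid M.rot)
abbrev FF : Submodule KK (D → KK) := InvS (Equiv.Perm.SameCycle.setoid (M.rot * M.inv))

theorem EF_orth : (BB D).orthogonal M.EF = M.EF := by
  classical
  ext z
  rw [LinearMap.BilinForm.mem_orthogonal_iff, mem_InvS_cycle]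
  constructor
  · intro h d
    have hm : (Pi.single d 1 + Pi.single (M.inv d) 1 : D → KK) ∈ M.EF := by
      rw [mem_InvS_cycle]
      intro e
      have : M.inv e = d ↔ e = M.inv d := by
        constructor
        · rintro rfl; rw [M.inv_invol]
        · rintro rfl; rw [M.inv_invol]
      simp [Pi.single_apply, this, add_comm]
    have := h _ hm
    rw [BB_apply] at this
    simp [Pi.single_apply, add_mul, Finset.sum_add_distrib] at this
    exact (kk_eq this).symm
  · intro h g hg
    rw [mem_InvS_cycle] at hg
    rw [BB_apply]
    refine Finset.sum_involution (fun d _ => M.inv d) ?_ ?_ ?_ ?_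
    · intro a _
      simp only [h, hg, kk_add_self]
    · intro a _ _; exact M.inv_ne a
    · intro a _; simp
    · intro a _; exact M.inv_invol a

theorem finrank_const (hc : M.Connected) (W : Submodule KK (D → KK))
    (hW : ∀ f ∈ W, (∀ d, f (M.rot d) = f d) ∧ (∀ d, f (M.inv d) = f d)) :
    Module.finrank KK W ≤ 1 := by
  have hle : W ≤ Submodule.span KK {(fun _ => 1 : D → KK)} := by
    intro f hf
    rw [Submodule.mem_span_singleton]
    obtain ⟨h1, h2⟩ := hW f hf
    rcases isEmpty_or_nonempty D with h | ⟨⟨d0⟩⟩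
    · exact ⟨0, Subsingleton.elim _ _⟩
    · refine ⟨f d0, ?_⟩
      funext d
      simp [M.const_of_inv hc f h1 h2 d0 d]
  exact (Submodule.finrank_mono hle).trans ((finrank_span_le_card _).trans (by simp))

def delta : (D → KK) →ₗ[KK] (D → KK) where
  toFun f := fun d => f d + f (M.rot d)
  map_add' := by intro f g; funext d; simp; ring
  map_smul' := by intro c f; funext d; simp; ring

theorem FF_spec (f : D → KK) (hf : f ∈ M.FF) (d : D) : f (M.inv d) = f (M.rot d) := by
  rw [mem_InvS_cycle] at hf
  have := hf (M.inv d)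
  simp only [Equiv.Perm.mul_apply, M.inv_invol] at this
  exact this.symm

theorem cycle_face (h4 : M.FourRegular) (hc : M.Connected) (hp : M.EulerPlanar)
    (y : D → KK) (hy : M.EvenZ y) : ∃ f ∈ M.FF, ∀ d, y d = f d + f (M.rot d) := by
  have hE : Module.finrank KK M.EF = M.edgeCount := finrank_InvS _
  have hV : Module.finrank KK M.VF = M.vertexCount := finrank_InvS _
  have hF : Module.finrank KK M.FF = M.faceCount := finrank_InvS _
  have h1 := LinearMap.BilinForm.finrank_add_finrank_orthogonal' (B := BB D) M.EF
  rw [BB_nondeg.ker_eq_bot, inf_bot_eq, finrank_bot, add_zero, EF_orth, hE] at h1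
  have h2 := LinearMap.BilinForm.finrank_add_finrank_orthogonal' (B := BB D) (M.EF ⊔ M.VF)
  rw [BB_nondeg.ker_eq_bot, inf_bot_eq, finrank_bot, add_zero] at h2
  have h3 := Submodule.finrank_sup_add_finrank_inf_eq M.EF M.VF
  have h5 : Module.finrank KK (M.EF ⊓ M.VF : Submodule KK (D → KK)) ≤ 1 := by
    refine M.finrank_const hc _ ?_
    rintro f ⟨ha, hb⟩
    exact ⟨(mem_InvS_cycle _ _).1 hb, (mem_InvS_cycle _ _).1 ha⟩
  have h6 := LinearMap.finrank_range_add_finrank_ker (M.delta.domRestrict M.FF)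
  have h7 : Module.finrank KK (LinearMap.ker (M.delta.domRestrict M.FF)) ≤ 1 := by
    rw [← Submodule.finrank_map_subtype_eq]
    refine M.finrank_const hc _ ?_
    rintro _ ⟨⟨f, hf⟩, hk, rfl⟩
    have hk' : ∀ d, f d + f (M.rot d) = 0 := fun d => congrFun (LinearMap.mem_ker.1 hk) d
    have hr : ∀ d, f (M.rot d) = f d := fun d => (kk_eq (hk' d)).symm
    exact ⟨hr, fun d => (M.FF_spec f hf d).trans (hr d)⟩
  have hle : LinearMap.range (M.delta.domRestrict M.FF) ≤
      (BB D).orthogonal (M.EF ⊔ M.VF) := by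
    rintro _ ⟨⟨f, hf⟩, rfl⟩
    rw [LinearMap.BilinForm.mem_orthogonal_iff]
    intro g hg
    obtain ⟨g1, hg1, g2, hg2, rfl⟩ := Submodule.mem_sup.1 hg
    rw [mem_InvS_cycle] at hg1 hg2
    rw [map_add, LinearMap.add_apply]
    have e1 : BB D g1 (M.delta.domRestrict M.FF ⟨f, hf⟩) = 0 := by
      rw [BB_apply]
      have : ∀ d, g1 d * (M.delta.domRestrict M.FF ⟨f, hf⟩) d =
          g1 d * f d + g1 (M.inv d) * f (M.inv d) := by
        intro d
        change g1 d * (f d + f (M.rot d)) = _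
        rw [hg1, M.FF_spec f hf]; ring
      simp only [this, Finset.sum_add_distrib]
      rw [Equiv.sum_comp M.inv (fun d => g1 d * f d), kk_add_self]
    have e2 : BB D g2 (M.delta.domRestrict M.FF ⟨f, hf⟩) = 0 := by
      rw [BB_apply]
      have : ∀ d, g2 d * (M.delta.domRestrict M.FF ⟨f, hf⟩) d =
          g2 d * f d + g2 (M.rot d) * f (M.rot d) := by
        intro d
        change g2 d * (f d + f (M.rot d)) = _
        rw [hg2]; ring
      simp only [this, Finset.sum_add_distrib]
      rw [Equiv.sum_comp M.rot (fun d => g2 d * f d), kk_add_self]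
    rw [e1, e2, add_zero]
  have heq : LinearMap.range (M.delta.domRestrict M.FF) =
      (BB D).orthogonal (M.EF ⊔ M.VF) := by
    refine Submodule.eq_of_le_of_finrank_le hle ?_
    unfold EulerPlanar at hp
    omega
  have hmem : y ∈ (BB D).orthogonal (M.EF ⊔ M.VF) := by
    rw [LinearMap.BilinForm.mem_orthogonal_iff]
    intro g hg
    obtain ⟨g1, hg1, g2, hg2, rfl⟩ := Submodule.mem_sup.1 hg
    rw [map_add, LinearMap.add_apply]
    have e1 : BB D g1 y = 0 := by
      have : y ∈ (BB D).orthogonal M.EF := by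
        rw [EF_orth, mem_InvS_cycle]; exact hy.1
      exact this g1 hg1
    have e2 : BB D g2 y = 0 := by
      rw [mem_InvS_cycle] at hg2
      rw [BB_apply]
      refine M.sum_four h4 _ ?_
      intro d
      simp only [hg2]
      rw [← mul_add, ← mul_add, ← mul_add, hy.2, mul_zero]
    rw [e1, e2, add_zero]
  rw [← heq] at hmem
  obtain ⟨⟨f, hf⟩, rfl⟩ := hmem
  exact ⟨f, hf, fun d => rfl⟩

theorem evenZ_of_face (h4 : M.FourRegular) (f : D → KK) (hf : f ∈ M.FF) :
    M.EvenZ (fun d => f d + f (M.rot d)) := by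
  constructor
  · intro d
    have h1 := M.FF_spec f hf d
    have h2 := M.FF_spec f hf (M.inv d)
    rw [M.inv_invol] at h2
    simp only [h1, ← h2, add_comm]
  · intro d
    simp only [h4.1]
    linear_combination kk_add_self (f d) + kk_add_self (f (M.rot d)) +
      kk_add_self (f (M.rot (M.rot d))) + kk_add_self (f (M.rot (M.rot (M.rot d))))

theorem decomp (h4 : M.FourRegular) (hc : M.Connected) (hp : M.EulerPlanar) :
    ∃ k : D → KK, (∀ d, k (M.rot d) = k d + 1) ∧ ∀ y, M.EvenZ y →
      ∃ y1 y2, M.EvenZ y1 ∧ M.EvenZ y2 ∧ (∀ d, y d = y1 d + y2 d) ∧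
        (∀ d, k d = 0 → y1 d = y1 (M.rot d)) ∧ (∀ d, k d = 1 → y2 d = y2 (M.rot d)) := by
  obtain ⟨k, hk, hk1⟩ := M.cycle_face h4 hc hp (fun _ => 1)
    ⟨fun _ => rfl, fun _ => rfl⟩
  have hkr : ∀ d, k (M.rot d) = k d + 1 := fun d => by
    have := hk1 d
    linear_combination -this - kk_add_self (k d)
  refine ⟨k, hkr, fun y hy => ?_⟩
  obtain ⟨f, hf, hyf⟩ := M.cycle_face h4 hc hp y hy
  have hkf : (fun d => k d * f d) ∈ M.FF := by
    rw [mem_InvS_cycle] at *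
    intro d; rw [hk, hf]
  have hkf' : (fun d => (k d + 1) * f d) ∈ M.FF := by
    rw [mem_InvS_cycle] at *
    intro d; rw [hk, hf]
  refine ⟨_, _, M.evenZ_of_face h4 _ hkf, M.evenZ_of_face h4 _ hkf', ?_, ?_, ?_⟩
  · intro d
    rw [hyf d]
    simp only [hkr]
    linear_combination -(k d * kk_add_self (f d)) - (k d + 1) * kk_add_self (f (M.rot d))
  · intro d hd
    simp [hkr, hd, kk_add_self]
  · intro d hd
    have h2 : (1 : KK) + 1 = 0 := rfl
    simp [hkr, hd, h2]

theorem perm6 (M' : CombMap D) (h4 : M.FourRegular) (h4' : M'.FourRegular)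
    (hvert : ∀ d e : D, M.rot.SameCycle d e ↔ M'.rot.SameCycle d e) (d : D) :
    (M'.rot d = M.rot d ∧ M'.rot (M.rot d) = M.rot (M.rot d) ∧
      M'.rot (M.rot (M.rot d)) = M.rot (M.rot (M.rot d)) ∧ M'.rot (M.rot (M.rot (M.rot d))) = d) ∨
    (M'.rot d = M.rot d ∧ M'.rot (M.rot d) = M.rot (M.rot (M.rot d)) ∧
      M'.rot (M.rot (M.rot (M.rot d))) = M.rot (M.rot d) ∧ M'.rot (M.rot (M.rot d)) = d) ∨
    (M'.rot d = M.rot (M.rot d) ∧ M'.rot (M.rot (M.rot d)) = M.rot d ∧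
      M'.rot (M.rot d) = M.rot (M.rot (M.rot d)) ∧ M'.rot (M.rot (M.rot (M.rot d))) = d) ∨
    (M'.rot d = M.rot (M.rot d) ∧ M'.rot (M.rot (M.rot d)) = M.rot (M.rot (M.rot d)) ∧
      M'.rot (M.rot (M.rot (M.rot d))) = M.rot d ∧ M'.rot (M.rot d) = d) ∨
    (M'.rot d = M.rot (M.rot (M.rot d)) ∧ M'.rot (M.rot (M.rot (M.rot d))) = M.rot d ∧
      M'.rot (M.rot d) = M.rot (M.rot d) ∧ M'.rot (M.rot (M.rot d)) = d) ∨
    (M'.rot d = M.rot (M.rot (M.rot d)) ∧ M'.rot (M.rot (M.rot (M.rot d))) = M.rot (M.rot d) ∧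
      M'.rot (M.rot (M.rot d)) = M.rot d ∧ M'.rot (M.rot d) = d) := by
  have key : ∀ x, M.rot.SameCycle d x → M.rot.SameCycle d (M'.rot x) := by
    intro x hx
    rw [hvert] at *
    exact Equiv.Perm.sameCycle_apply_right.2 hx
  simp only [M.sameCycle_four h4] at key
  have c0 := key d (by simp)
  have c1 := key (M.rot d) (by simp)
  have c2 := key (M.rot (M.rot d)) (by simp)
  have c3 := key (M.rot (M.rot (M.rot d))) (by simp)
  obtain ⟨n4, n1, n2⟩ := h4'
  obtain ⟨m4, m1, m2⟩ := h4
  have m3 : M.rot (M.rot (M.rot d)) ≠ d := by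
    intro hd
    have := m4 d
    rw [hd] at this
    exact m1 d this
  have i1 := m1 d
  have i2 := m1 (M.rot d)
  have i3 := m1 (M.rot (M.rot d))
  have i4 := m2 d
  have i5 := m2 (M.rot d)
  have e0 := n4 d
  have e1 := n4 (M.rot d)
  have e2 := n4 (M.rot (M.rot d))
  have e3 := n4 (M.rot (M.rot (M.rot d)))
  have a0 := n1 d
  have a1 := n1 (M.rot d)
  have a2 := n1 (M.rot (M.rot d))
  have a3 := n1 (M.rot (M.rot (M.rot d)))
  have b0 := n2 d
  have b1 := n2 (M.rot d)
  have b2 := n2 (M.rot (M.rot d))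
  have b3 := n2 (M.rot (M.rot (M.rot d)))
  clear key n1 n2 n4 m1 m2 m4 hvert
  generalize M.rot (M.rot (M.rot d)) = x3 at *
  generalize M.rot (M.rot d) = x2 at *
  generalize M.rot d = x1 at *
  rcases c0 with c0 | c0 | c0 | c0 <;> rcases c1 with c1 | c1 | c1 | c1 <;>
    grind

theorem evenZ_iff (M' : CombMap D) (h4 : M.FourRegular) (h4' : M'.FourRegular)
    (hinv : M.inv = M'.inv)
    (hvert : ∀ d e : D, M.rot.SameCycle d e ↔ M'.rot.SameCycle d e) (y : D → KK)
    (hy : M.EvenZ y) : M'.EvenZ y := by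
  refine ⟨hinv ▸ hy.1, fun d => ?_⟩
  have h := hy.2 d
  rcases M.perm6 M' h4 h4' hvert d with ⟨h1, h2, h3, h4⟩ | ⟨h1, h2, h3, h4⟩ | ⟨h1, h2, h3, h4⟩ |
    ⟨h1, h2, h3, h4⟩ | ⟨h1, h2, h3, h4⟩ | ⟨h1, h2, h3, h4⟩ <;> rw [h1, h2, h3] <;>
    linear_combination h

theorem EvenZ.add {M : CombMap D} {y z : D → KK} (hy : M.EvenZ y) (hz : M.EvenZ z) :
    M.EvenZ (fun d => y d + z d) :=
  ⟨fun d => by simp only [hy.1, hz.1], fun d => by linear_combination hy.2 d + hz.2 d⟩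

theorem kk_cases (a : KK) : a = 0 ∨ a = 1 := by revert a; decide

theorem core (M' : CombMap D) (h4 : M.FourRegular) (h4' : M'.FourRegular)
    (hinv : M.inv = M'.inv)
    (hvert : ∀ d e : D, M.rot.SameCycle d e ↔ M'.rot.SameCycle d e)
    (hc : M.Connected) (hc' : M'.Connected) (hp : M.EulerPlanar) (hp' : M'.EulerPlanar)
    (z : D → KK) (hz : z ∈ M.SFun) :
    ∃ z' ∈ M'.SFun, ∀ d, z' d + z' (M'.rot d) = z d + z (M.rot d) := by
  obtain ⟨k, hk, hdec⟩ := M.decomp h4 hc hp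
  obtain ⟨k', hk', hdec'⟩ := M'.decomp h4' hc' hp'
  have hE : ∀ y, M.EvenZ y → M'.EvenZ y := M.evenZ_iff M' h4 h4' hinv hvert
  have hE' : ∀ y, M'.EvenZ y → M.EvenZ y :=
    M'.evenZ_iff M h4' h4 hinv.symm (fun d e => (hvert d e).symm)
  have hz0 : M.EvenZ z := by
    refine ⟨fun d => (hz d).1, fun d => ?_⟩
    rw [(hz (M.rot d)).2, (hz d).2]
    linear_combination kk_add_self (z d) + kk_add_self (z (M.rot d))
  obtain ⟨p, q, hp0, hq0, hpq, hpk, hqk⟩ := hdec z hz0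
  obtain ⟨p1, p2, hp10, hp20, hp12, hp1k, hp2k⟩ := hdec' p (hE _ hp0)
  obtain ⟨q1, q2, hq10, hq20, hq12, hq1k, hq2k⟩ := hdec' q (hE _ hq0)
  obtain ⟨r1, r2, hr10, hr20, hr12, hr1k, hr2k⟩ := hdec p1 (hE' _ hp10)
  obtain ⟨s1, s2, hs10, hs20, hs12, hs1k, hs2k⟩ := hdec q1 (hE' _ hq10)
  have hz' : M'.EvenZ (fun d => z d + r2 d + s1 d) := hE _ ((hz0.add hr20).add hs10)
  have main : ∀ d, (z (M'.rot (M'.rot d)) + r2 (M'.rot (M'.rot d)) + s1 (M'.rot (M'.rot d)) =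
      z d + r2 d + s1 d) ∧ (z d + r2 d + s1 d) +
      (z (M'.rot d) + r2 (M'.rot d) + s1 (M'.rot d)) = z d + z (M.rot d) := by
    intro d
    have m4 := h4.1 d
    have n4 := h4'.1 d
    have P := M.perm6 M' h4 h4' hvert d
    have z1 := (hz d).2
    have z2 := (hz (M.rot d)).2
    have ex : ∀ f : D → Prop, (∀ d, f d) → f d ∧ f (M.rot d) ∧ f (M.rot (M.rot d)) ∧
      f (M.rot (M.rot (M.rot d))) := fun f hf => ⟨hf _, hf _, hf _, hf _⟩
    replace hk := ex _ hk
    replace hpq := ex _ hpq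
    replace hp12 := ex _ hp12
    replace hq12 := ex _ hq12
    replace hr12 := ex _ hr12
    replace hs12 := ex _ hs12
    replace hpk := ex _ hpk
    replace hqk := ex _ hqk
    replace hp1k := ex _ hp1k
    replace hp2k := ex _ hp2k
    replace hq1k := ex _ hq1k
    replace hq2k := ex _ hq2k
    replace hr1k := ex _ hr1k
    replace hr2k := ex _ hr2k
    replace hs1k := ex _ hs1k
    replace hs2k := ex _ hs2k
    clear ex hdec hdec' hE hE' hz0 hp0 hq0 hp10 hp20 hq10 hq20 hr10 hr20 hs10 hs20 hz' hc hc' hp hp'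
    clear hinv hvert hz h4 h4'
    simp only [m4] at *
    generalize M.rot (M.rot (M.rot d)) = x3 at *
    generalize M.rot (M.rot d) = x2 at *
    generalize M.rot d = x1 at *
    obtain ⟨hk0, hk1, hk2, -⟩ := hk
    have o2 : (1 : KK) + 1 = 0 := rfl
    have o1 : (0 : KK) ≠ 1 := by decide
    have o1' : (1 : KK) ≠ 0 := by decide
    have K : ∀ a b c : D, M'.rot d = a → M'.rot a = b → M'.rot b = c →
        k' a = k' d + 1 ∧ k' b = k' d + 1 + 1 ∧ k' c = k' d + 1 + 1 + 1 := by
      rintro a b c rfl rfl rfl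
      simp only [hk', and_self]
    clear hk'
    rw [hk1, hk0] at hk2
    rw [hk0] at hk1
    rcases P with ⟨h1, h2, h3, h4⟩ | ⟨h1, h2, h3, h4⟩ | ⟨h1, h2, h3, h4⟩ |
      ⟨h1, h2, h3, h4⟩ | ⟨h1, h2, h3, h4⟩ | ⟨h1, h2, h3, h4⟩ <;>
    obtain ⟨K1, K2, K3⟩ := K _ _ _ h1 h2 h3 <;> clear K n4 <;>
    simp only [h1, h2, h3, h4, hk0, hk1, hk2, K1, K2, K3] at hpk hqk hp1k hp2k hq1k hq2k hr1k hr2k hs1k hs2k ⊢ <;>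
    clear h1 h2 h3 h4 hk0 hk1 hk2 K1 K2 K3 m4 <;>
    rcases kk_cases (k d) with a | a <;> rcases kk_cases (k' d) with b | b <;>
    simp only [a, b, o2, o1, o1', zero_add, forall_const, false_imp_iff, true_and, and_true] at hpk hqk hp1k hp2k hq1k hq2k hr1k hr2k hs1k hs2k <;>
    clear a b <;>
    grind
  refine ⟨_, fun d => ⟨hz'.1 d, (main d).1⟩, fun d => (main d).2⟩

theorem card_le (M' : CombMap D) (h4 : M.FourRegular) (h4' : M'.FourRegular)
    (hinv : M.inv = M'.inv)
    (hvert : ∀ d e : D, M.rot.SameCycle d e ↔ M'.rot.SameCycle d e)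
    (hc : M.Connected) (hc' : M'.Connected) (hp : M.EulerPlanar) (hp' : M'.EulerPlanar) :
    M.circuitCount ≤ M'.circuitCount := by
  classical
  rcases isEmpty_or_nonempty D with hD | ⟨⟨d0⟩⟩
  · rw [← M.circuitCount_eq h4.1, ← M'.circuitCount_eq h4'.1]
    rw [Module.finrank_zero_of_subsingleton]; exact Nat.zero_le _
  have ex : ∀ z : M.SFun, ∃ z' : M'.SFun,
      (∀ d, z'.1 d + z'.1 (M'.rot d) = z.1 d + z.1 (M.rot d)) ∧ z'.1 d0 = z.1 d0 := by
    rintro ⟨z, hz⟩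
    obtain ⟨z', hz', h⟩ := M.core M' h4 h4' hinv hvert hc hc' hp hp' z hz
    refine ⟨⟨fun d => z' d + (z' d0 + z d0), fun d => ?_⟩, fun d => ?_, ?_⟩
    · simp [(hz' d).1, (hz' d).2]
    · simp only
      linear_combination h d + kk_add_self (z' d0 + z d0)
    · simp only
      linear_combination kk_add_self (z' d0)
  choose F hF hF0 using ex
  have hinj : Function.Injective F := by
    intro a b hab
    have h1 : ∀ d, a.1 d + a.1 (M.rot d) = b.1 d + b.1 (M.rot d) := fun d => by
      rw [← hF a d, ← hF b d, hab]
    have h0 : a.1 d0 = b.1 d0 := by rw [← hF0 a, ← hF0 b, hab]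
    apply Subtype.ext
    funext d
    have := M.const_of_inv hc (fun d => a.1 d - b.1 d) (fun d => by
      linear_combination h1 d - kk_add_self (a.1 d) + kk_add_self (b.1 d)) (fun d => by
      simp only [(a.2 d).1, (b.2 d).1]) d d0
    linear_combination this + h0
  have hcard := Fintype.card_le_of_injective F hinj
  rw [Module.card_eq_pow_finrank (K := KK), Module.card_eq_pow_finrank (K := KK) (V := M'.SFun),
    M.circuitCount_eq h4.1, M'.circuitCount_eq h4'.1, ZMod.card] at hcard
  exact (Nat.pow_le_pow_iff_right (by norm_num)).1 hcard

end CombMap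

/-- If `G` is a 2-connected 4-regular planar graph, and `M`,
`M'` are two planar embeddings of `G` (combinatorial maps on the same darts
with the same edge involution and the same vertices, i.e. the two rotations
have the same orbits), with threaded circuit partitions `C` and `C'`, then
`|C| = |C'|`: the number of threaded circuits is independent of the embedding.
2-connectedness: removing (the darts at) any single vertex leaves the remaining
darts mutually reachable. -/
theorem threaded_circuit_count_is_embedding_invariant
    {D : Type} [Fintype D] [DecidableEq D] (M M' : CombMap D)
    (hinv : M.inv = M'.inv)
    (hvert : ∀ d e : D, M.rot.SameCycle d e ↔ M'.rot.SameCycle d e)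
    (h4 : M.FourRegular) (h4' : M'.FourRegular)
    (hconn : M.Connected) (hconn' : M'.Connected)
    (hpl : M.EulerPlanar) (hpl' : M'.EulerPlanar)
    (h2conn : ∀ v a b : D, ¬ M.rot.SameCycle v a → ¬ M.rot.SameCycle v b →
      M.ReachAvoiding {x | M.rot.SameCycle v x} a b) :
    M.circuitCount = M'.circuitCount := by
  exact le_antisymm
    (M.card_le M' h4 h4' hinv hvert hconn hconn' hpl hpl')
    (M'.card_le M h4' h4 hinv.symm (fun d e => (hvert d e).symm) hconn' hconn hpl' hpl)
end
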